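/- arXiv:2003.08856 — 3 statements merged into one kernel-verified Lean document; each statement's English description precedes it below -/
import Mathlib

section
/- Let (G_s)_{s≥1} be a (deterministic) growing graph sequence as in the context, let t≥1, let u≠v be vertices in [t], let (ℓ_{k,t'})_{k≥0,t'≥t} be a birth-threshold array, and let K̲_{t,t'} := K_{t,t'} − M_G for some fixed integer M_G≥0, where K_{t,t'} := max( 2⌊(log log t − log(1∨log(t'/t)))/|log(τ−2)|⌋ , 2 ) for a fixed τ∈(2,3). Then: (i) if there exist t'≥t and a t'-present (u,v)-path of length at most 2·K̲_{t,t'}, then there exists t'≥t such that either E_bad^{(q)}(k,t') holds for some q∈{u,v} and some 0≤k≤K̲_{t,t'}, or E_short^{(u,v)}(n,t') holds for some 0≤n≤2·K̲_{t,t'}; (ii) for any k≥2 and t'>t, if E_bad^{(u)}(k,t') holds then there exist a vertex x with 1≤x<ℓ_{k,t'}, an index 1≤i≤k−1, and a t'-present path (u=π_0,π_1,…,π_k=x) of pairwise distinct vertices with π_i=t' and ℓ_{j,t'}≤π_j≤t' for all j<k; (iii) for any n≥2 and t'>t, if E_short^{(u,v)}(n,t') holds then, for some ordering (q_1,q_2)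 of (u,v), either there exist a vertex x with ℓ_{⌊n/2⌋,t'}≤x≤t'−1, an index 1≤i≤⌊n/2⌋−1, a t'-present path (q_1=π_0,…,π_{⌊n/2⌋}=x) of distinct vertices with π_i=t' and ℓ_{j,t'}≤π_j≤t' for all j<⌊n/2⌋, and a t'-present path (q_2=σ_0,…,σ_{⌈n/2⌉}=x) with ℓ_{j,t'}≤σ_j≤t' for all j<⌈n/2⌉, the two paths sharing no vertex except x; or there exist a t'-present path of length ⌊n/2⌋ from q_1 to t' and a t'-present path of length ⌈n/2⌉ from q_2 to t' satisfying the same birth constraints (ℓ_{j,t'} ≤ j-th vertex ≤ t' for j before the endpoint) and sharing no vertex except t'. -/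
open MeasureTheory ProbabilityTheory Real Filter Finset

noncomputable section

/-- `K_{t,t'}`. -/
def Kfun (τ : ℝ) (t t' : ℕ) : ℕ :=
  max (2 * ⌊(Real.log (Real.log t) - Real.log (max 1 (Real.log ((t' : ℝ) / t)))) /
        |Real.log (τ - 2)|⌋₊) 2

/-- a growing (multi)graph sequence, recorded through its adjacency relations
`A s u v`: the vertex set of `G_s` is `[s]`, `G_s ⊆ G_{s+1}`, and every new edge is
incident to the newly arrived vertex. -/
def GrowingGraph (A : ℕ → ℕ → ℕ → Prop) : Prop :=
  (∀ s u v, A s u v → A s v u) ∧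
  (∀ s u v, A s u v → 1 ≤ u ∧ u ≤ s ∧ 1 ≤ v ∧ v ≤ s) ∧
  (∀ s u v, A s u v → A (s + 1) u v) ∧
  (∀ s u v, A (s + 1) u v → ¬A s u v → u = s + 1 ∨ v = s + 1)

/-- `pth 0, …, pth n` is a `t'`-present path: pairwise distinct vertices of `[t']`,
consecutive ones adjacent in `G_{t'}`. -/
def PresPath (A : ℕ → ℕ → ℕ → Prop) (t' n : ℕ) (pth : ℕ → ℕ) : Prop :=
  (∀ i ≤ n, ∀ j ≤ n, pth i = pth j → i = j) ∧
  (∀ i ≤ n, 1 ≤ pth i ∧ pth i ≤ t') ∧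
  (∀ i < n, A t' (pth i) (pth (i + 1)))

/-- graph distance at time `t'` (`⊤` if not connected). -/
def dGraph (A : ℕ → ℕ → ℕ → Prop) (t' u v : ℕ) : ENNReal :=
  ⨅ (n : ℕ) (_ : ∃ pth : ℕ → ℕ, PresPath A t' n pth ∧ pth 0 = u ∧ pth n = v), (n : ENNReal)

/-- a birth-threshold array for base time `t`. -/
def BirthArray (t : ℕ) (ℓ : ℕ → ℕ → ℕ) : Prop :=
  (∀ k t', t ≤ t' → 1 ≤ ℓ k t') ∧
  (∀ k k' t', t ≤ t' → k ≤ k' → ℓ k' t' ≤ ℓ k t') ∧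
  (∀ k t₁ t₂, t ≤ t₁ → t₁ ≤ t₂ → ℓ k t₂ ≤ ℓ k t₁) ∧
  (∀ t', t ≤ t' → ℓ 0 t' ≤ t)

/-- a `(k,t')`-bad `q`-path which is `t'`-present. -/
def BadPath (A : ℕ → ℕ → ℕ → Prop) (ℓ : ℕ → ℕ → ℕ) (q k t' : ℕ) (pth : ℕ → ℕ) : Prop :=
  PresPath A t' k pth ∧ pth 0 = q ∧ (∀ j < k, ℓ j t' ≤ pth j) ∧ pth k < ℓ k t'

/-- an `(n,t')`-good `(u,v)`-path which is `t'`-present. -/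
def GoodPath (A : ℕ → ℕ → ℕ → Prop) (ℓ : ℕ → ℕ → ℕ) (u v n t' : ℕ) (pth : ℕ → ℕ) : Prop :=
  PresPath A t' n pth ∧ pth 0 = u ∧ pth n = v ∧
  ∀ j ≤ n / 2, ℓ j t' ≤ min (pth j) (pth (n - j))

/-- the event `E_bad^{(q)}(k,t')` (for base time `t`). -/
def Ebad (A : ℕ → ℕ → ℕ → Prop) (ℓ : ℕ → ℕ → ℕ) (t q k t' : ℕ) : Prop :=
  if k = 0 then q < ℓ 0 t'
  else if t' = t then ∃ pth : ℕ → ℕ, BadPath A ℓ q k t pth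
  else (∃ pth : ℕ → ℕ, BadPath A ℓ q k t' pth) ∧
    ∀ i ≤ k, ¬∃ pth : ℕ → ℕ, BadPath A ℓ q i (t' - 1) pth

/-- the event `E_short^{(u,v)}(n,t')` (for base time `t`). -/
def Eshort (A : ℕ → ℕ → ℕ → Prop) (ℓ : ℕ → ℕ → ℕ) (t u v n t' : ℕ) : Prop :=
  if n = 0 then u = v
  else if t' = t then ∃ pth : ℕ → ℕ, GoodPath A ℓ u v n t pth
  else (∃ pth : ℕ → ℕ, GoodPath A ℓ u v n t' pth) ∧
    ∀ s < t', ¬∃ pth : ℕ → ℕ, PresPath A s n pth ∧ pth 0 = u ∧ pth n = v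

/-- the path weight `p(pth_0,…,pth_k)` of condition `PA(γ)` (zero unless the vertices
are pairwise distinct). -/
def pfun (ν γ : ℝ) (l : List ℕ) : ℝ :=
  if l.Nodup then
    ((l.zip l.tail).map (fun q =>
      ν * ((min q.1 q.2 : ℕ) : ℝ) ^ (-γ) * ((max q.1 q.2 : ℕ) : ℝ) ^ (γ - 1))).prod
  else 0

/-- condition `PA(γ)` with constant `ν` for a random growing graph sequence. -/
def PAgamma {Ω : Type} [MeasurableSpace Ω] (μ : Measure Ω)
    (A : Ω → ℕ → ℕ → ℕ → Prop) (γ ν : ℝ) : Prop :=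
  ∀ t' : ℕ, ∀ l : List ℕ, l.Nodup → (∀ v ∈ l, 1 ≤ v ∧ v ≤ t') →
    μ {ω | l.Chain' (A ω t')} ≤ ENNReal.ofReal (pfun ν γ l)

/-- `f_{[i,k)}^{(t,t')}(y,x)`: expected number (upper bound) of good paths on the
segment `[i,k)` from `y` to `x`, with thresholds `ℓt j = ℓ_{j,t'}`. -/
def ffun (ν γ : ℝ) (ℓt : ℕ → ℕ) (t' i k y x : ℕ) : ℝ :=
  ∑ g ∈ Fintype.piFinset (fun _ : Fin (k - i - 1) => Finset.Icc 1 t'),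
    if ∀ j : Fin (k - i - 1), ℓt (i + 1 + (j : ℕ)) ≤ g j then
      pfun ν γ (y :: (List.ofFn g ++ [x]))
    else 0

/-- the pair `(α_{[0,j)}, β_{[0,j)})`. -/
def abRec (c ν γ : ℝ) (ℓt : ℕ → ℕ) (t' : ℕ) : ℕ → ℝ × ℝ
  | 0 => (0, 0)
  | 1 => (ν * (ℓt 0 : ℝ) ^ (γ - 1), ν * (ℓt 0 : ℝ) ^ (-γ))
  | (j + 2) =>
    (c * ((abRec c ν γ ℓt t' (j + 1)).1 * Real.log ((t' : ℝ) / ℓt (j + 1)) +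
        (abRec c ν γ ℓt t' (j + 1)).2 * (t' : ℝ) ^ (2 * γ - 1)),
     c * ((abRec c ν γ ℓt t' (j + 1)).1 * (ℓt (j + 1) : ℝ) ^ (1 - 2 * γ) +
        (abRec c ν γ ℓt t' (j + 1)).2 * Real.log ((t' : ℝ) / ℓt (j + 1))))

/-- the pair `(φ_{[i,i+j)}, ψ_{[i,i+j)})`. -/
def ppRec (c ν γ : ℝ) (ℓt : ℕ → ℕ) (t' i : ℕ) : ℕ → ℝ × ℝ
  | 0 => (0, 0)
  | 1 => (ν * (t' : ℝ) ^ (γ - 1), 0)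
  | (j + 2) =>
    (c * ((ppRec c ν γ ℓt t' i (j + 1)).1 * Real.log ((t' : ℝ) / ℓt (i + j + 1)) +
        (ppRec c ν γ ℓt t' i (j + 1)).2 * (t' : ℝ) ^ (2 * γ - 1)),
     c * ((ppRec c ν γ ℓt t' i (j + 1)).1 * (ℓt (i + j + 1) : ℝ) ^ (1 - 2 * γ) +
        (ppRec c ν γ ℓt t' i (j + 1)).2 * Real.log ((t' : ℝ) / ℓt (i + j + 1))))

/-!
Everything happens at first times. Given a short `(u,v)`-path, consider the first time at or
after `t` at which a path of the same length is present: either it respects the thresholds from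
both ends, which is `E_short`, or one of its two halves dips below them, and then the first time
at which such a bad path is present gives `E_bad`. Conversely, an event first occurring at
`t' > t` must use the newest vertex `t'`, since a path avoiding `t'` was already present at
`t' - 1`, where the thresholds were higher, so that one of its prefixes was already bad if the path
is bad at `t'`. The end vertices are at most `t`, hence `t'` is an interior vertex.
-/

section

variable {A : ℕ → ℕ → ℕ → Prop} {ℓ : ℕ → ℕ → ℕ} {t t' s s' u v q k m n i j a b : ℕ} {p : ℕ → ℕ}

/-- There is an `s`-present `(u,v)`-path of length `n`. -/
def HasPath (A : ℕ → ℕ → ℕ → Prop) (s n u v : ℕ) : Prop :=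
  ∃ p : ℕ → ℕ, PresPath A s n p ∧ p 0 = u ∧ p n = v

theorem Kfun_antitoneOn (τ : ℝ) (ht : 1 ≤ t) : AntitoneOn (Kfun τ t) (Set.Ici t) := by
  intro s hs s' _ hss'
  have ht_pos : (0 : ℝ) < t := by exact_mod_cast ht
  have hs_pos : (0 : ℝ) < s := by exact_mod_cast ht.trans hs
  have h_log : Real.log ((s : ℝ) / t) ≤ Real.log ((s' : ℝ) / t) :=
    Real.log_le_log (div_pos hs_pos ht_pos) (by gcongr)
  have h_loglog : Real.log (max 1 (Real.log ((s : ℝ) / t))) ≤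
      Real.log (max 1 (Real.log ((s' : ℝ) / t))) := by gcongr
  unfold Kfun
  gcongr

theorem GrowingGraph.symm (hA : GrowingGraph A) (s : ℕ) : Std.Symm (A s) :=
  ⟨hA.1 s⟩

theorem GrowingGraph.monotone (hA : GrowingGraph A) : Monotone A :=
  monotone_nat_of_le_succ hA.2.2.1

theorem GrowingGraph.adj_of_ne (hA : GrowingGraph A) (huv : A (s + 1) u v) (hu : u ≠ s + 1)
    (hv : v ≠ s + 1) : A s u v := by
  by_contra hnew
  exact (hA.2.2.2 s u v huv hnew).elim hu hv

theorem BirthArray.le_base (hℓ : BirthArray t ℓ) (ht : t ≤ t') (k : ℕ) : ℓ k t' ≤ t :=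
  (hℓ.2.1 0 k t' ht k.zero_le).trans (hℓ.2.2.2 t' ht)

namespace PresPath

theorem mono (hA : Monotone A) (hs : s ≤ s') (hp : PresPath A s n p) : PresPath A s' n p :=
  ⟨hp.1, fun i hi ↦ ⟨(hp.2.1 i hi).1, (hp.2.1 i hi).2.trans hs⟩,
    fun i hi ↦ hA hs _ _ (hp.2.2 i hi)⟩

theorem take (hm : m ≤ n) (hp : PresPath A s n p) : PresPath A s m p :=
  ⟨fun i hi j hj ↦ hp.1 i (hi.trans hm) j (hj.trans hm), fun i hi ↦ hp.2.1 i (hi.trans hm),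
    fun i hi ↦ hp.2.2 i (hi.trans_le hm)⟩

theorem reverse [Std.Symm (A s)] (hp : PresPath A s n p) :
    PresPath A s n (fun j ↦ p (n - j)) := by
  refine ⟨fun i hi j hj hij ↦ ?_, fun i _ ↦ hp.2.1 _ (n.sub_le i), fun i hi ↦ ?_⟩
  · have := hp.1 (n - i) (n.sub_le i) (n - j) (n.sub_le j) hij
    omega
  · have hadj := Std.Symm.symm _ _ (hp.2.2 (n - (i + 1)) (by omega))
    rwa [show n - (i + 1) + 1 = n - i by omega] at hadj

theorem of_forall_ne (hA : GrowingGraph A) (hp : PresPath A (s + 1) n p)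
    (hne : ∀ i ≤ n, p i ≠ s + 1) : PresPath A s n p :=
  ⟨hp.1,
    fun i hi ↦ ⟨(hp.2.1 i hi).1, Nat.le_of_lt_succ ((hp.2.1 i hi).2.lt_of_ne (hne i hi))⟩,
    fun i hi ↦ hA.adj_of_ne (hp.2.2 i hi) (hne i hi.le) (hne (i + 1) hi)⟩

theorem eq_of_eq_reverse (hp : PresPath A s n p) (ha : a ≤ m) (hb : m + b ≤ n)
    (h : p a = p (n - b)) : a = m := by
  have := hp.1 a (by omega) (n - b) (n.sub_le b) h
  omega

theorem exists_badPath (hp : PresPath A s n p) (hj : j ≤ n) (hlt : p j < ℓ j s) :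
    ∃ k ≤ j, BadPath A ℓ (p 0) k s p := by
  obtain ⟨k, hkj, hk⟩ := exists_minimal_le_of_wellFoundedLT (fun k ↦ p k < ℓ k s) j hlt
  exact ⟨k, hkj, hp.take (hkj.trans hj), rfl,
    fun i hi ↦ not_lt.1 (hk.not_prop_of_lt hi), hk.prop⟩

theorem goodPath_or_exists_badPath [Std.Symm (A s)] (hp : PresPath A s n p) :
    GoodPath A ℓ (p 0) (p n) n s p ∨
      ∃ q, (q = p 0 ∨ q = p n) ∧ ∃ k ≤ n / 2, ∃ p', BadPath A ℓ q k s p' := by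
  by_cases hgood : ∀ j ≤ n / 2, ℓ j s ≤ min (p j) (p (n - j))
  · exact .inl ⟨hp, rfl, rfl, hgood⟩
  push Not at hgood
  obtain ⟨j, hj, hlt⟩ := hgood
  have hjn : j ≤ n := hj.trans (n.div_le_self 2)
  rcases min_lt_iff.1 hlt with hleft | hright
  · obtain ⟨k, hk, hbad⟩ := hp.exists_badPath hjn hleft
    exact .inr ⟨p 0, .inl rfl, k, hk.trans hj, _, hbad⟩
  · obtain ⟨k, hk, hbad⟩ := hp.reverse.exists_badPath hjn hright
    exact .inr ⟨p n, .inr rfl, k, hk.trans hj, _, hbad⟩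

end PresPath

theorem HasPath.mono (hA : Monotone A) (hs : s ≤ s') : HasPath A s n u v → HasPath A s' n u v :=
  fun ⟨p, hp, hends⟩ ↦ ⟨p, hp.mono hA hs, hends⟩

theorem ebad_iff_of_lt (hk : k ≠ 0) (ht : t < t') :
    Ebad A ℓ t q k t' ↔
      (∃ p, BadPath A ℓ q k t' p) ∧ ∀ i ≤ k, ¬∃ p, BadPath A ℓ q i (t' - 1) p := by
  rw [Ebad, if_neg hk, if_neg ht.ne']

theorem eshort_iff_of_lt (hn : n ≠ 0) (ht : t < t') :
    Eshort A ℓ t u v n t' ↔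
      (∃ p, GoodPath A ℓ u v n t' p) ∧ ∀ s < t', ¬HasPath A s n u v := by
  rw [Eshort, if_neg hn, if_neg ht.ne']
  rfl

theorem BadPath.ebad (hp : BadPath A ℓ q k s p) (hts : t ≤ s)
    (hnew : t < s → ∀ i ≤ k, ¬∃ p, BadPath A ℓ q i (s - 1) p) : Ebad A ℓ t q k s := by
  rcases eq_or_ne k 0 with rfl | hk
  · simpa only [Ebad, if_pos, hp.2.1] using hp.2.2.2
  rcases hts.eq_or_lt with rfl | hlt
  · simpa only [Ebad, if_neg hk, if_pos] using ⟨p, hp⟩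
  · exact (ebad_iff_of_lt hk hlt).2 ⟨⟨p, hp⟩, hnew hlt⟩

theorem GoodPath.eshort (hp : GoodPath A ℓ u v n s p) (hts : t ≤ s)
    (hnew : t < s → ∀ r < s, ¬HasPath A r n u v) : Eshort A ℓ t u v n s := by
  rcases eq_or_ne n 0 with rfl | hn
  · simpa only [Eshort, if_pos] using hp.2.1.symm.trans hp.2.2.1
  rcases hts.eq_or_lt with rfl | hlt
  · simpa only [Eshort, if_neg hn, if_pos] using ⟨p, hp⟩
  · exact (eshort_iff_of_lt hn hlt).2 ⟨⟨p, hp⟩, hnew hlt⟩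

theorem BadPath.exists_ebad (hp : BadPath A ℓ q k s p) (hts : t ≤ s) :
    ∃ r, t ≤ r ∧ r ≤ s ∧ ∃ i ≤ k, Ebad A ℓ t q i r := by
  obtain ⟨r, hrs, hr⟩ := exists_minimal_le_of_wellFoundedLT
    (fun r ↦ t ≤ r ∧ ∃ i ≤ k, ∃ p, BadPath A ℓ q i r p) s ⟨hts, k, le_rfl, p, hp⟩
  obtain ⟨htr, i, hi, p', hp'⟩ := hr.prop
  refine ⟨r, htr, hrs, i, hi, hp'.ebad htr fun hlt i' hi' hbad ↦ ?_⟩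
  exact hr.not_prop_of_lt (y := r - 1) (by omega) ⟨by omega, i', hi'.trans hi, hbad⟩

theorem HasPath.exists_ebad_or_eshort (hA : GrowingGraph A) (ℓ : ℕ → ℕ → ℕ) (ht : t ≤ t')
    (h : HasPath A t' n u v) :
    ∃ s, t ≤ s ∧ s ≤ t' ∧
      ((∃ q, (q = u ∨ q = v) ∧ ∃ k ≤ n / 2, Ebad A ℓ t q k s) ∨ Eshort A ℓ t u v n s) := by
  obtain ⟨s, hst', hs⟩ := exists_minimal_le_of_wellFoundedLT
    (fun s ↦ t ≤ s ∧ HasPath A s n u v) t' ⟨ht, h⟩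
  obtain ⟨hts, p, hp, rfl, rfl⟩ := hs.prop
  have := hA.symm s
  rcases hp.goodPath_or_exists_badPath (ℓ := ℓ) with hgood | ⟨q, hq, k, hk, p', hbad⟩
  · refine ⟨s, hts, hst', .inr (hgood.eshort hts fun hlt r hr hpath ↦ ?_)⟩
    exact hs.not_prop_of_lt (max_lt hr hlt)
      ⟨le_max_right r t, hpath.mono hA.monotone (le_max_left r t)⟩
  · obtain ⟨r, htr, hrs, i, hi, hE⟩ := hbad.exists_ebad hts
    exact ⟨r, htr, hrs.trans hst', .inl ⟨q, hq, i, hi.trans hk, hE⟩⟩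

/-- Some `(k,t')`-bad `q`-path has the newest vertex `t'` in its interior: the decomposition of
`E_bad^{(q)}(k,t')` in part (ii). -/
def NewestInsideBadPath (A : ℕ → ℕ → ℕ → Prop) (ℓ : ℕ → ℕ → ℕ) (q k t' : ℕ) : Prop :=
  ∃ x : ℕ, 1 ≤ x ∧ x < ℓ k t' ∧ ∃ i : ℕ, 1 ≤ i ∧ i ≤ k - 1 ∧
    ∃ p : ℕ → ℕ, PresPath A t' k p ∧ p 0 = q ∧ p k = x ∧ p i = t' ∧
      ∀ j < k, ℓ j t' ≤ p j ∧ p j ≤ t'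

theorem Ebad.newestInsideBadPath (hA : GrowingGraph A) (hℓ : BirthArray t ℓ) (hq : q ≤ t)
    (hk : k ≠ 0) (ht : t < t') (hE : Ebad A ℓ t q k t') : NewestInsideBadPath A ℓ q k t' := by
  obtain ⟨⟨p, hp, rfl, hthr, hlast⟩, hnew⟩ := (ebad_iff_of_lt hk ht).1 hE
  obtain ⟨i, hi, hpi⟩ : ∃ i ≤ k, p i = t' := by
    by_contra! hne
    obtain ⟨s, rfl⟩ := Nat.exists_eq_add_one_of_ne_zero (Nat.ne_zero_of_lt ht)
    have hlast' : p k < ℓ k s :=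
      hlast.trans_le (hℓ.2.2.1 k s (s + 1) (Nat.le_of_lt_succ ht) s.le_succ)
    obtain ⟨j, hj, hbad⟩ := (hp.of_forall_ne hA hne).exists_badPath le_rfl hlast'
    exact hnew j hj ⟨p, hbad⟩
  have hi_first : i ≠ 0 := by rintro rfl; omega
  have hi_last : i ≠ k := by
    rintro rfl
    have := hℓ.le_base ht.le i
    omega
  exact ⟨p k, (hp.2.1 k le_rfl).1, hlast, i, by omega, by omega, p, hp, rfl, rfl, hpi,
    fun j hj ↦ ⟨hthr j hj, (hp.2.1 j hj.le).2⟩⟩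

/-- The first alternative of part (iii): two threshold-respecting paths of lengths `⌊n/2⌋` and
`⌈n/2⌉`, from `q₁` and `q₂`, meet only in a common end vertex `x < t'`, and the newest vertex `t'`
is an interior vertex of the path from `q₁`. -/
def NewestInsideHalf (A : ℕ → ℕ → ℕ → Prop) (ℓ : ℕ → ℕ → ℕ) (q₁ q₂ n t' : ℕ) : Prop :=
  ∃ x : ℕ, ℓ (n / 2) t' ≤ x ∧ x ≤ t' - 1 ∧ ∃ i : ℕ, 1 ≤ i ∧ i ≤ n / 2 - 1 ∧
    ∃ p σ : ℕ → ℕ,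
      PresPath A t' (n / 2) p ∧ p 0 = q₁ ∧ p (n / 2) = x ∧ p i = t' ∧
        (∀ j < n / 2, ℓ j t' ≤ p j ∧ p j ≤ t') ∧
      PresPath A t' ((n + 1) / 2) σ ∧ σ 0 = q₂ ∧ σ ((n + 1) / 2) = x ∧
        (∀ j < (n + 1) / 2, ℓ j t' ≤ σ j ∧ σ j ≤ t') ∧
      (∀ a : ℕ, a ≤ n / 2 → ∀ b : ℕ, b ≤ (n + 1) / 2 → p a = σ b → p a = x)

/-- The second alternative of part (iii): two threshold-respecting paths of lengths `⌊n/2⌋` and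
`⌈n/2⌉`, from `q₁` and `q₂`, meet only in the newest vertex `t'`, where both end. -/
def NewestAtMidpoint (A : ℕ → ℕ → ℕ → Prop) (ℓ : ℕ → ℕ → ℕ) (q₁ q₂ n t' : ℕ) : Prop :=
  ∃ p σ : ℕ → ℕ,
    PresPath A t' (n / 2) p ∧ p 0 = q₁ ∧ p (n / 2) = t' ∧
      (∀ j < n / 2, ℓ j t' ≤ p j ∧ p j ≤ t') ∧
    PresPath A t' ((n + 1) / 2) σ ∧ σ 0 = q₂ ∧ σ ((n + 1) / 2) = t' ∧
      (∀ j < (n + 1) / 2, ℓ j t' ≤ σ j ∧ σ j ≤ t') ∧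
    (∀ a : ℕ, a ≤ n / 2 → ∀ b : ℕ, b ≤ (n + 1) / 2 → p a = σ b → p a = t')

namespace GoodPath

theorem reverse [Std.Symm (A t')] (hp : GoodPath A ℓ u v n t' p) :
    GoodPath A ℓ v u n t' (fun j ↦ p (n - j)) := by
  refine ⟨hp.1.reverse, hp.2.2.1, by simpa only [Nat.sub_self] using hp.2.1, fun j hj ↦ ?_⟩
  simpa only [Nat.sub_sub_self (show j ≤ n by omega), min_comm] using hp.2.2.2 j hj

theorem left_bounds (hp : GoodPath A ℓ u v n t' p) (hj : j ≤ n / 2) :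
    ℓ j t' ≤ p j ∧ p j ≤ t' :=
  ⟨(le_min_iff.1 (hp.2.2.2 j hj)).1, (hp.1.2.1 j (by omega)).2⟩

theorem right_bounds (hp : GoodPath A ℓ u v n t' p) (hj : j ≤ n / 2) :
    ℓ j t' ≤ p (n - j) ∧ p (n - j) ≤ t' :=
  ⟨(le_min_iff.1 (hp.2.2.2 j hj)).2, (hp.1.2.1 (n - j) (n.sub_le j)).2⟩

theorem newestInsideHalf [Std.Symm (A t')] (hp : GoodPath A ℓ u v n t' p) (hi : 1 ≤ i)
    (hin : i < n / 2) (hpi : p i = t') : NewestInsideHalf A ℓ u v n t' := by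
  have hmid_ne : p (n / 2) ≠ t' := fun hmid ↦
    hin.ne (hp.1.1 i (by omega) (n / 2) (by omega) (hpi.trans hmid.symm))
  have hmid_le : p (n / 2) ≤ t' - 1 :=
    Nat.le_sub_one_of_lt ((hp.left_bounds le_rfl).2.lt_of_ne hmid_ne)
  refine ⟨p (n / 2), (hp.left_bounds le_rfl).1, hmid_le, i, hi, by omega, p, fun j ↦ p (n - j),
    hp.1.take (by omega), hp.2.1, rfl, hpi, fun j hj ↦ hp.left_bounds hj.le,
    hp.1.reverse.take (by omega), hp.2.2.1, congrArg p (by omega),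
    fun j hj ↦ hp.right_bounds (by omega), fun a ha b hb hab ↦ ?_⟩
  rw [hp.1.eq_of_eq_reverse ha (by omega) hab]

theorem newestAtMidpoint [Std.Symm (A t')] (hp : GoodPath A ℓ u v n t' p)
    (hmid : p (n / 2) = t') : NewestAtMidpoint A ℓ u v n t' := by
  refine ⟨p, fun j ↦ p (n - j), hp.1.take (by omega), hp.2.1, hmid,
    fun j hj ↦ hp.left_bounds hj.le, hp.1.reverse.take (by omega), hp.2.2.1,
    (congrArg p (by omega)).trans hmid, fun j hj ↦ hp.right_bounds (by omega),
    fun a ha b hb hab ↦ ?_⟩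
  rw [hp.1.eq_of_eq_reverse ha (by omega) hab, hmid]

theorem newestInsideHalf_or_newestAtMidpoint [Std.Symm (A t')]
    (hp : GoodPath A ℓ u v n t' p) (hi : 1 ≤ i) (hin : i ≤ n / 2) (hpi : p i = t') :
    NewestInsideHalf A ℓ u v n t' ∨ NewestAtMidpoint A ℓ u v n t' := by
  rcases hin.lt_or_eq with hlt | rfl
  · exact .inl (hp.newestInsideHalf hi hlt hpi)
  · exact .inr (hp.newestAtMidpoint hpi)

end GoodPath

theorem Eshort.newestInsideHalf_or_newestAtMidpoint (hA : GrowingGraph A) (hu : u ≤ t)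
    (hv : v ≤ t) (hn : n ≠ 0) (ht : t < t') (hE : Eshort A ℓ t u v n t') :
    ∃ q₁ q₂, ((q₁ = u ∧ q₂ = v) ∨ (q₁ = v ∧ q₂ = u)) ∧
      (NewestInsideHalf A ℓ q₁ q₂ n t' ∨ NewestAtMidpoint A ℓ q₁ q₂ n t') := by
  obtain ⟨⟨p, hp⟩, hnew⟩ := (eshort_iff_of_lt hn ht).1 hE
  obtain ⟨i, hi, hpi⟩ : ∃ i ≤ n, p i = t' := by
    by_contra! hne
    obtain ⟨s, rfl⟩ := Nat.exists_eq_add_one_of_ne_zero (Nat.ne_zero_of_lt ht)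
    exact hnew s s.lt_succ_self ⟨p, hp.1.of_forall_ne hA hne, hp.2.1, hp.2.2.1⟩
  have hp_first : p 0 = u := hp.2.1
  have hp_last : p n = v := hp.2.2.1
  have hi_first : i ≠ 0 := by rintro rfl; omega
  have hi_last : i ≠ n := by rintro rfl; omega
  have := hA.symm t'
  rcases le_or_gt i (n / 2) with hleft | hright
  · exact ⟨u, v, .inl ⟨rfl, rfl⟩,
      hp.newestInsideHalf_or_newestAtMidpoint (by omega) hleft hpi⟩
  · exact ⟨v, u, .inr ⟨rfl, rfl⟩,
      hp.reverse.newestInsideHalf_or_newestAtMidpoint (i := n - i) (by omega)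
        (by omega) ((congrArg p (Nat.sub_sub_self hi)).trans hpi)⟩

end

theorem good_bad_path_decomposition_general
    {A : ℕ → ℕ → ℕ → Prop} (hA : GrowingGraph A) {t u v : ℕ} (hu : u ≤ t) (hv : v ≤ t)
    {ℓ : ℕ → ℕ → ℕ} (hℓ : BirthArray t ℓ) {K : ℕ → ℕ} (hK : AntitoneOn K (Set.Ici t)) :
    ((∃ t', t ≤ t' ∧ ∃ n, n ≤ 2 * K t' ∧ HasPath A t' n u v) →
      ∃ t', t ≤ t' ∧
        ((∃ q, (q = u ∨ q = v) ∧ ∃ k, k ≤ K t' ∧ Ebad A ℓ t q k t') ∨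
          ∃ n, n ≤ 2 * K t' ∧ Eshort A ℓ t u v n t')) ∧
    (∀ k t', k ≠ 0 → t < t' → Ebad A ℓ t u k t' → NewestInsideBadPath A ℓ u k t') ∧
    (∀ n t', n ≠ 0 → t < t' → Eshort A ℓ t u v n t' →
      ∃ q₁ q₂, ((q₁ = u ∧ q₂ = v) ∨ (q₁ = v ∧ q₂ = u)) ∧
        (NewestInsideHalf A ℓ q₁ q₂ n t' ∨ NewestAtMidpoint A ℓ q₁ q₂ n t')) := by
  refine ⟨?_, fun k t' ↦ Ebad.newestInsideBadPath hA hℓ hu,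
    fun n t' ↦ Eshort.newestInsideHalf_or_newestAtMidpoint hA hu hv⟩
  rintro ⟨t', ht', n, hn, hpath⟩
  obtain ⟨s, hts, hst', hE⟩ := hpath.exists_ebad_or_eshort hA ℓ ht'
  have hbudget : K t' ≤ K s := hK hts ht' hst'
  rcases hE with ⟨q, hq, k, hk, hbad⟩ | hshort
  · exact ⟨s, hts, .inl ⟨q, hq, k, by omega, hbad⟩⟩
  · exact ⟨s, hts, .inr ⟨n, by omega, hshort⟩⟩

/-- **Proposition 3.9** (good/bad path decomposition, deterministic form):
(i) a too-short present `(u,v)`-path at some `t' ≥ t` forces one of the events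
`E_bad` or `E_short`; (ii) decomposition of `E_bad(k,t')` for `t' > t` through the
newly arrived vertex `t'`; (iii) decomposition of `E_short(n,t')` for `t' > t`. -/
theorem good_bad_path_decomposition
    (A : ℕ → ℕ → ℕ → Prop) (hA : GrowingGraph A)
    (τ : ℝ) (hτ1 : 2 < τ) (hτ2 : τ < 3)
    (t : ℕ) (ht : 1 ≤ t) (u v : ℕ)
    (hu : u ∈ Finset.Icc 1 t) (hv : v ∈ Finset.Icc 1 t) (huv : u ≠ v)
    (ℓ : ℕ → ℕ → ℕ) (hℓ : BirthArray t ℓ) (MG : ℕ) :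
    -- (i)
    ((∃ t' : ℕ, t ≤ t' ∧ ∃ n : ℕ, n ≤ 2 * (Kfun τ t t' - MG) ∧
        ∃ pth : ℕ → ℕ, PresPath A t' n pth ∧ pth 0 = u ∧ pth n = v) →
      ∃ t' : ℕ, t ≤ t' ∧
        ((∃ q : ℕ, (q = u ∨ q = v) ∧ ∃ k : ℕ, k ≤ Kfun τ t t' - MG ∧ Ebad A ℓ t q k t') ∨
         (∃ n : ℕ, n ≤ 2 * (Kfun τ t t' - MG) ∧ Eshort A ℓ t u v n t'))) ∧
    -- (ii)
    (∀ k t' : ℕ, 2 ≤ k → t < t' → Ebad A ℓ t u k t' →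
      ∃ x : ℕ, 1 ≤ x ∧ x < ℓ k t' ∧ ∃ i : ℕ, 1 ≤ i ∧ i ≤ k - 1 ∧
        ∃ pth : ℕ → ℕ, PresPath A t' k pth ∧ pth 0 = u ∧ pth k = x ∧ pth i = t' ∧
          ∀ j < k, ℓ j t' ≤ pth j ∧ pth j ≤ t') ∧
    -- (iii)
    (∀ n t' : ℕ, 2 ≤ n → t < t' → Eshort A ℓ t u v n t' →
      ∃ q₁ q₂ : ℕ, ((q₁ = u ∧ q₂ = v) ∨ (q₁ = v ∧ q₂ = u)) ∧
        ((∃ x : ℕ, ℓ (n / 2) t' ≤ x ∧ x ≤ t' - 1 ∧ ∃ i : ℕ, 1 ≤ i ∧ i ≤ n / 2 - 1 ∧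
            ∃ pth sg : ℕ → ℕ,
              PresPath A t' (n / 2) pth ∧ pth 0 = q₁ ∧ pth (n / 2) = x ∧ pth i = t' ∧
                (∀ j < n / 2, ℓ j t' ≤ pth j ∧ pth j ≤ t') ∧
              PresPath A t' ((n + 1) / 2) sg ∧ sg 0 = q₂ ∧ sg ((n + 1) / 2) = x ∧
                (∀ j < (n + 1) / 2, ℓ j t' ≤ sg j ∧ sg j ≤ t') ∧
              (∀ a : ℕ, a ≤ n / 2 → ∀ b : ℕ, b ≤ (n + 1) / 2 →
                pth a = sg b → pth a = x)) ∨
         (∃ pth sg : ℕ → ℕ,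
            PresPath A t' (n / 2) pth ∧ pth 0 = q₁ ∧ pth (n / 2) = t' ∧
              (∀ j < n / 2, ℓ j t' ≤ pth j ∧ pth j ≤ t') ∧
            PresPath A t' ((n + 1) / 2) sg ∧ sg 0 = q₂ ∧ sg ((n + 1) / 2) = t' ∧
              (∀ j < (n + 1) / 2, ℓ j t' ≤ sg j ∧ sg j ≤ t') ∧
            (∀ a : ℕ, a ≤ n / 2 → ∀ b : ℕ, b ≤ (n + 1) / 2 →
              pth a = sg b → pth a = t')))) := by
  obtain ⟨short_path, bad_path, good_path⟩ := good_bad_path_decomposition_general hA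
    (Finset.mem_Icc.1 hu).2 (Finset.mem_Icc.1 hv).2 hℓ
    fun _ hs _ hs' hle ↦ Nat.sub_le_sub_right (Kfun_antitoneOn τ ht hs hs' hle) MG
  exact ⟨short_path, fun k t' hk ↦ bad_path k t' (by omega),
    fun n t' hn ↦ good_path n t' (by omega)⟩

end
end

section
/- Let γ∈(1/2,1) and ν>0. Then there exists c>1 (depending only on γ and ν) such that the following holds for every t≥1, every t'≥t, and every birth-threshold array (ℓ_{k,t'})_{k≥0,t'≥t} with η_{j,t'}:=t'/ℓ_{j,t'}≥e for all j≥0: with the sequences α,β,φ,ψ defined by the recursions in the context (with these constants c and ν), for all i≥0, j≥1 and all x∈[t']: f_{[i,i+j)}^{(t,t')}(t',x) ≤ x^{−γ}·φ_{[i,i+j)} + 1{x>ℓ_{i+j−1,t'}}·x^{γ−1}·ψ_{[i,i+j)}; and for every vertex q with ℓ_{0,t'}≤q≤t' and every j≥1, x∈[t']: f_{[0,j)}^{(t,t')}(q,x) ≤ 1{x<t'}·x^{−γ}·α_{[0,j)} + 1{x>ℓ_{j−1,t'}}·x^{γ−1}·β_{[0,j)}. -/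
open MeasureTheory ProbabilityTheory Real Filter Finset

noncomputable section

/-!
A path with `n + 1` inner vertices is a path with `n` inner vertices followed by one more edge, so
`f` grows by convolution with the edge weight `p(z, x)`. Convolving `z ^ (-γ) * a + z ^ (γ - 1) * b`
with this weight and splitting at `z = x` leaves the sums of `z⁻¹`, `z ^ (2 * γ - 2)` and
`z ^ (-2 * γ)` over `[L, T]`, which are of order `log (T / L)`, `T ^ (2 * γ - 1)` and
`L ^ (1 - 2 * γ)`. Up to the constant `c`, this is the recursion defining both `(α, β)` and
`(φ, ψ)`; the two estimates differ only in their first edge.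
-/

section PowerSums

variable {L T : ℕ} {r : ℝ}

lemma sum_Icc_rpow_le_add_integral (hL : 1 ≤ L) (hLT : L ≤ T) (hr : r ≤ 0) :
    ∑ z ∈ Icc L T, (z : ℝ) ^ r ≤ (L : ℝ) ^ r + ∫ x in (L : ℝ)..T, x ^ r := by
  have hL_pos : (0 : ℝ) < L := by exact_mod_cast hL
  have antitone_rpow : AntitoneOn (fun x : ℝ => x ^ r) (Set.Icc (L : ℝ) T) :=
    (antitoneOn_rpow_Ioi_of_exponent_nonpos hr).mono fun x hx => hL_pos.trans_le hx.1
  rw [← add_sum_Ioc_eq_sum_Icc hLT]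
  gcongr
  rw [← Ico_add_one_add_one_eq_Ioc, ← sum_Ico_add' (fun z : ℕ => (z : ℝ) ^ r)]
  exact antitone_rpow.sum_le_integral_Ico hLT

lemma sum_Icc_inv_le_one_add_log (hL : 1 ≤ L) (hLT : L ≤ T) :
    ∑ z ∈ Icc L T, (z : ℝ)⁻¹ ≤ 1 + log (T / L) := by
  have one_le_L : (1 : ℝ) ≤ L := by exact_mod_cast hL
  have hL_pos : (0 : ℝ) < L := by positivity
  have hT_pos : (0 : ℝ) < T := hL_pos.trans_le (by exact_mod_cast hLT)
  have h := sum_Icc_rpow_le_add_integral hL hLT (r := -1) (by norm_num)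
  simp only [rpow_neg_one] at h
  rw [integral_inv_of_pos hL_pos hT_pos] at h
  linarith [inv_le_one_of_one_le₀ one_le_L]

lemma sum_Icc_rpow_le_of_neg_one_lt (hL : 1 ≤ L) (hLT : L ≤ T) (hr : -1 < r) (hr0 : r ≤ 0) :
    ∑ z ∈ Icc L T, (z : ℝ) ^ r ≤ (T : ℝ) ^ (r + 1) / (r + 1) := by
  have one_le_L : (1 : ℝ) ≤ L := by exact_mod_cast hL
  have first_term : (L : ℝ) ^ r ≤ (L : ℝ) ^ (r + 1) / (r + 1) := calc
    (L : ℝ) ^ r ≤ (L : ℝ) ^ (r + 1) := rpow_le_rpow_of_exponent_le one_le_L (by linarith)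
    _ ≤ (L : ℝ) ^ (r + 1) / (r + 1) := le_div_self (by positivity) (by linarith) (by linarith)
  have h := sum_Icc_rpow_le_add_integral hL hLT hr0
  rw [integral_rpow (.inl hr), sub_div] at h
  linarith

lemma sum_Icc_rpow_le_of_lt_neg_one (hL : 1 ≤ L) (hLT : L ≤ T) (hr : r < -1) :
    ∑ z ∈ Icc L T, (z : ℝ) ^ r ≤ (1 + 1 / (-r - 1)) * (L : ℝ) ^ (r + 1) := by
  have one_le_L : (1 : ℝ) ≤ L := by exact_mod_cast hL
  have one_le_T : (1 : ℝ) ≤ T := by exact_mod_cast hL.trans hLT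
  have first_term : (L : ℝ) ^ r ≤ (L : ℝ) ^ (r + 1) :=
    rpow_le_rpow_of_exponent_le one_le_L (by linarith)
  have tail_nonneg : 0 ≤ (T : ℝ) ^ (r + 1) / (-r - 1) := div_nonneg (by positivity) (by linarith)
  have zero_notMem : (0 : ℝ) ∉ Set.uIcc (L : ℝ) T :=
    Set.notMem_uIcc_of_lt (by linarith) (by linarith)
  have h := sum_Icc_rpow_le_add_integral hL hLT (r := r) (by linarith)
  rw [integral_rpow (.inr ⟨hr.ne, zero_notMem⟩), ← neg_div_neg_eq, neg_sub, neg_add', sub_div] at h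
  rw [add_mul, one_mul, one_div_mul_eq_div]
  linarith

end PowerSums

lemma sum_piFinset_succ_eq_sum_snoc {α M : Type*} [AddCommMonoid M] {n : ℕ}
    (s : Fin (n + 1) → Finset α) (F : (Fin (n + 1) → α) → M) :
    ∑ g ∈ Fintype.piFinset s, F g =
      ∑ z ∈ s (Fin.last n), ∑ g ∈ Fintype.piFinset (Fin.init s), F (Fin.snoc g z) := by
  have box_eq := filter_piFinset_eq_map_snocEquiv s (fun _ => True)
  simp only [filter_true] at box_eq
  rw [box_eq, sum_map, sum_product]
  rfl

lemma prod_map_zip_tail_append_pair {α M : Type*} [Monoid M] (f : α × α → M) (l : List α)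
    (z x : α) :
    (((l ++ [z, x]).zip (l ++ [z, x]).tail).map f).prod =
      (((l ++ [z]).zip (l ++ [z]).tail).map f).prod * f (z, x) := by
  induction l with
  | nil => simp
  | cons a l ih =>
    cases l with
    | nil => simp
    | cons b l =>
      simp only [List.cons_append, List.tail_cons, List.zip_cons_cons, List.map_cons,
        List.prod_cons] at ih ⊢
      rw [ih, mul_assoc]

section PathWeight

variable {ν γ : ℝ}

lemma pfun_nonneg (hν : 0 ≤ ν) (l : List ℕ) : 0 ≤ pfun ν γ l := by
  unfold pfun
  split_ifs
  · refine List.prod_nonneg fun a ha => ?_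
    obtain ⟨q, -, rfl⟩ := List.mem_map.1 ha
    positivity
  · exact le_rfl

lemma pfun_pair_self (z : ℕ) : pfun ν γ [z, z] = 0 := by
  simp [pfun]

lemma pfun_pair_comm (z x : ℕ) : pfun ν γ [z, x] = pfun ν γ [x, z] := by
  simp [pfun, eq_comm, min_comm, max_comm]

lemma pfun_pair_of_lt {z x : ℕ} (h : z < x) :
    pfun ν γ [z, x] = ν * (z : ℝ) ^ (-γ) * (x : ℝ) ^ (γ - 1) := by
  simp [pfun, h.ne, -Nat.cast_min, -Nat.cast_max, min_eq_left h.le, max_eq_right h.le]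

lemma pfun_append_pair_le (hν : 0 ≤ ν) (l : List ℕ) (z x : ℕ) :
    pfun ν γ (l ++ [z, x]) ≤ pfun ν γ (l ++ [z]) * pfun ν γ [z, x] := by
  by_cases nodup : (l ++ [z, x]).Nodup
  · have nodup_init : (l ++ [z]).Nodup := nodup.sublist (by simp)
    have nodup_edge : [z, x].Nodup := nodup.of_append_right
    refine le_of_eq ?_
    rw [pfun, pfun, pfun, if_pos nodup, if_pos nodup_init, if_pos nodup_edge,
      prod_map_zip_tail_append_pair]
    simp
  · rw [pfun, if_neg nodup]
    exact mul_nonneg (pfun_nonneg hν _) (pfun_nonneg hν _)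

variable {m : ℕ → ℕ} {T : ℕ}

lemma ffun_eq_sum_piFinset (hm : ∀ k, 1 ≤ m k) (i n y x : ℕ) :
    ffun ν γ m T i (i + n + 1) y x =
      ∑ g ∈ Fintype.piFinset (fun j : Fin n => Icc (m (i + 1 + j)) T),
        pfun ν γ (y :: (List.ofFn g ++ [x])) := by
  have inner_count : i + n + 1 - i - 1 = n := by omega
  rw [ffun, inner_count, ← sum_filter]
  refine sum_congr ?_ fun _ _ => rfl
  ext g
  simp only [mem_filter, Fintype.mem_piFinset, mem_Icc, ← forall_and]
  exact forall_congr' fun j => by have := hm (i + 1 + j); omega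

lemma ffun_succ_self (hm : ∀ k, 1 ≤ m k) (i y x : ℕ) :
    ffun ν γ m T i (i + 1) y x = pfun ν γ [y, x] := by
  simpa using ffun_eq_sum_piFinset (ν := ν) (γ := γ) (T := T) hm i 0 y x

-- Only an inequality: the right-hand side also counts walks whose endpoint `x` repeats a vertex.
lemma ffun_succ_le_sum (hν : 0 ≤ ν) (hm : ∀ k, 1 ≤ m k) (i n y x : ℕ) :
    ffun ν γ m T i (i + (n + 1) + 1) y x ≤
      ∑ z ∈ Icc (m (i + n + 1)) T, ffun ν γ m T i (i + n + 1) y z * pfun ν γ [z, x] := by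
  simp only [ffun_eq_sum_piFinset hm, sum_piFinset_succ_eq_sum_snoc, sum_mul]
  rw [Fin.val_last, add_right_comm i 1 n]
  refine sum_le_sum fun z _ => sum_le_sum fun g _ => ?_
  rw [List.ofFn_succ']
  simpa using pfun_append_pair_le (γ := γ) hν (y :: List.ofFn g) z x

end PathWeight

/-- The two-regime bound `1{x < T} x^{-γ} a + 1{x > L} x^{γ-1} b` on the number of paths ending
in `x`, with the coefficients packed as `p = (a, b)`. -/
def pathBound (γ : ℝ) (L T : ℕ) (p : ℝ × ℝ) (x : ℕ) : ℝ :=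
  (if x < T then (x : ℝ) ^ (-γ) * p.1 else 0) + (if L < x then (x : ℝ) ^ (γ - 1) * p.2 else 0)

/-- One step of the recursion shared by `(α, β)` and `(φ, ψ)`, acting on the pair of coefficients
of a `pathBound` when paths are prolonged through a vertex in `[L, T]`. -/
def boundStep (c γ : ℝ) (L T : ℕ) (p : ℝ × ℝ) : ℝ × ℝ :=
  (c * (p.1 * log ((T : ℝ) / L) + p.2 * (T : ℝ) ^ (2 * γ - 1)),
    c * (p.1 * (L : ℝ) ^ (1 - 2 * γ) + p.2 * log ((T : ℝ) / L)))

/-- The coefficients of the `pathBound` in `x` obtained from `z ^ (-γ) * p.1 + z ^ (γ - 1) * p.2`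
by appending the single edge from `z` to `x`. -/
def edgeCoeff (ν γ : ℝ) (p : ℝ × ℝ) (z : ℕ) : ℝ × ℝ :=
  (ν * (p.1 * (z : ℝ)⁻¹ + p.2 * (z : ℝ) ^ (2 * γ - 2)),
    ν * (p.1 * (z : ℝ) ^ (-(2 * γ)) + p.2 * (z : ℝ)⁻¹))

section PathBound

variable {γ : ℝ} {L T : ℕ} {p : ℝ × ℝ}

lemma pathBound_nonneg (hp : 0 ≤ p) (x : ℕ) : 0 ≤ pathBound γ L T p x := by
  obtain ⟨ha, hb⟩ : 0 ≤ p.1 ∧ 0 ≤ p.2 := hp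
  unfold pathBound
  split_ifs <;> positivity

lemma pathBound_mono {p' : ℝ × ℝ} (h : p ≤ p') (x : ℕ) :
    pathBound γ L T p x ≤ pathBound γ L T p' x := by
  obtain ⟨ha, hb⟩ : p.1 ≤ p'.1 ∧ p.2 ≤ p'.2 := h
  unfold pathBound
  split_ifs <;> gcongr

lemma sum_pathBound (s : Finset ℕ) (p : ℕ → ℝ × ℝ) (x : ℕ) :
    ∑ z ∈ s, pathBound γ L T (p z) x = pathBound γ L T (∑ z ∈ s, p z) x := by
  unfold pathBound
  rw [sum_add_distrib, Prod.fst_sum, Prod.snd_sum]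
  split_ifs <;> simp [mul_sum]

lemma pathBound_le_add_ite (hp : 0 ≤ p) (x : ℕ) :
    pathBound γ L T p x ≤
      (x : ℝ) ^ (-γ) * p.1 + (if L < x then (x : ℝ) ^ (γ - 1) * p.2 else 0) := by
  have ha : 0 ≤ p.1 := hp.1
  unfold pathBound
  gcongr
  split_ifs
  · exact le_rfl
  · positivity

lemma pathBound_le_add (hp : 0 ≤ p) (x : ℕ) :
    pathBound γ L T p x ≤ (x : ℝ) ^ (-γ) * p.1 + (x : ℝ) ^ (γ - 1) * p.2 := by
  have hb : 0 ≤ p.2 := hp.2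
  refine (pathBound_le_add_ite hp x).trans ?_
  gcongr
  split_ifs
  · exact le_rfl
  · positivity

lemma boundStep_nonneg {c : ℝ} (hc : 0 ≤ c) (hlog : 0 ≤ log ((T : ℝ) / L)) (hp : 0 ≤ p) :
    0 ≤ boundStep c γ L T p := by
  obtain ⟨ha, hb⟩ : 0 ≤ p.1 ∧ 0 ≤ p.2 := hp
  rw [boundStep]
  exact ⟨by positivity, by positivity⟩

lemma le_pathBound_of_lt (hp : 0 ≤ p) {x : ℕ} (hxT : x < T) :
    (x : ℝ) ^ (-γ) * p.1 ≤ pathBound γ L T p x := by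
  have hb : 0 ≤ p.2 := hp.2
  rw [pathBound, if_pos hxT, le_add_iff_nonneg_right]
  split_ifs <;> positivity

lemma le_pathBound_of_gt (hp : 0 ≤ p) {x : ℕ} (hLx : L < x) :
    (x : ℝ) ^ (γ - 1) * p.2 ≤ pathBound γ L T p x := by
  have ha : 0 ≤ p.1 := hp.1
  rw [pathBound, if_pos hLx, le_add_iff_nonneg_left]
  split_ifs <;> positivity

end PathBound

section Convolution

variable {ν γ : ℝ} {L T : ℕ} {p : ℝ × ℝ}

lemma edgeCoeff_nonneg (hν : 0 ≤ ν) (hp : 0 ≤ p) (z : ℕ) : 0 ≤ edgeCoeff ν γ p z := by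
  obtain ⟨ha, hb⟩ : 0 ≤ p.1 ∧ 0 ≤ p.2 := hp
  rw [edgeCoeff]
  exact ⟨by positivity, by positivity⟩

lemma mul_pfun_pair_le_pathBound (hν : 0 ≤ ν) (hp : 0 ≤ p) {z : ℕ} (hz : 1 ≤ z) (hLz : L ≤ z)
    (hzT : z ≤ T) (x : ℕ) :
    ((z : ℝ) ^ (-γ) * p.1 + (z : ℝ) ^ (γ - 1) * p.2) * pfun ν γ [z, x] ≤
      pathBound γ L T (edgeCoeff ν γ p z) x := by
  have coeff_nonneg : 0 ≤ edgeCoeff ν γ p z := edgeCoeff_nonneg hν hp z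
  have hz_pos : (0 : ℝ) < z := by exact_mod_cast hz
  have inv_eq : (z : ℝ)⁻¹ = (z : ℝ) ^ (-γ) * (z : ℝ) ^ (γ - 1) := by
    rw [← rpow_add hz_pos, ← rpow_neg_one]; ring_nf
  rcases lt_trichotomy z x with hzx | rfl | hxz
  · have rpow_eq : (z : ℝ) ^ (-(2 * γ)) = (z : ℝ) ^ (-γ) * (z : ℝ) ^ (-γ) := by
      rw [← rpow_add hz_pos]; ring_nf
    refine le_of_eq_of_le ?_ (le_pathBound_of_gt coeff_nonneg (hLz.trans_lt hzx))
    rw [pfun_pair_of_lt hzx, edgeCoeff, rpow_eq, inv_eq]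
    ring
  · rw [pfun_pair_self, mul_zero]
    exact pathBound_nonneg coeff_nonneg z
  · have rpow_eq : (z : ℝ) ^ (2 * γ - 2) = (z : ℝ) ^ (γ - 1) * (z : ℝ) ^ (γ - 1) := by
      rw [← rpow_add hz_pos]; ring_nf
    refine le_of_eq_of_le ?_ (le_pathBound_of_lt coeff_nonneg (hxz.trans_le hzT))
    rw [pfun_pair_comm, pfun_pair_of_lt hxz, edgeCoeff, rpow_eq, inv_eq]
    ring

lemma one_le_of_exp_one_le_div (hη : exp 1 ≤ (T : ℝ) / L) : 1 ≤ L := by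
  by_contra! hL
  obtain rfl : L = 0 := by omega
  simp only [Nat.cast_zero, div_zero] at hη
  exact (exp_pos 1).not_ge hη

lemma le_of_exp_one_le_div (hη : exp 1 ≤ (T : ℝ) / L) : L ≤ T := by
  have hL_pos : (0 : ℝ) < L := by exact_mod_cast one_le_of_exp_one_le_div hη
  have one_le_ratio : 1 ≤ (T : ℝ) / L := (one_le_exp zero_le_one).trans hη
  exact_mod_cast (one_le_div hL_pos).1 one_le_ratio

lemma one_le_log_of_exp_one_le_div (hη : exp 1 ≤ (T : ℝ) / L) : 1 ≤ log ((T : ℝ) / L) :=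
  (le_log_iff_exp_le ((exp_pos 1).trans_le hη)).2 hη

lemma sum_edgeCoeff_le_boundStep (hγ0 : 1 / 2 < γ) (hγ1 : γ ≤ 1) (hν : 0 ≤ ν)
    {c : ℝ} (hc : ν * (2 + 1 / (2 * γ - 1)) ≤ c) (hη : exp 1 ≤ (T : ℝ) / L) (hp : 0 ≤ p) :
    ∑ z ∈ Icc L T, edgeCoeff ν γ p z ≤ boundStep c γ L T p := by
  obtain ⟨ha, hb⟩ : 0 ≤ p.1 ∧ 0 ≤ p.2 := hp
  have hL := one_le_of_exp_one_le_div hη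
  have hLT := le_of_exp_one_le_div hη
  have one_le_log := one_le_log_of_exp_one_le_div hη
  have _ : 0 ≤ log ((T : ℝ) / L) := by linarith
  have slope_inv_nonneg : 0 ≤ 1 / (2 * γ - 1) := one_div_nonneg.2 (by linarith)
  set K : ℝ := 2 + 1 / (2 * γ - 1)
  have sum_inv_le : ∑ z ∈ Icc L T, (z : ℝ)⁻¹ ≤ K * log ((T : ℝ) / L) := calc
    _ ≤ 1 + log ((T : ℝ) / L) := sum_Icc_inv_le_one_add_log hL hLT
    _ ≤ 2 * log ((T : ℝ) / L) := by linarith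
    _ ≤ K * log ((T : ℝ) / L) := by gcongr; linarith
  have sum_upper_le : ∑ z ∈ Icc L T, (z : ℝ) ^ (2 * γ - 2) ≤ K * (T : ℝ) ^ (2 * γ - 1) := calc
    _ ≤ (T : ℝ) ^ (2 * γ - 2 + 1) / (2 * γ - 2 + 1) :=
      sum_Icc_rpow_le_of_neg_one_lt hL hLT (by linarith) (by linarith)
    _ = 1 / (2 * γ - 1) * (T : ℝ) ^ (2 * γ - 1) := by ring_nf
    _ ≤ K * (T : ℝ) ^ (2 * γ - 1) := by gcongr; linarith
  have sum_lower_le : ∑ z ∈ Icc L T, (z : ℝ) ^ (-(2 * γ)) ≤ K * (L : ℝ) ^ (1 - 2 * γ) := calc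
    _ ≤ (1 + 1 / (-(-(2 * γ)) - 1)) * (L : ℝ) ^ (-(2 * γ) + 1) :=
      sum_Icc_rpow_le_of_lt_neg_one hL hLT (by linarith)
    _ = (1 + 1 / (2 * γ - 1)) * (L : ℝ) ^ (1 - 2 * γ) := by ring_nf
    _ ≤ K * (L : ℝ) ^ (1 - 2 * γ) := by gcongr; linarith
  rw [Prod.le_def, Prod.fst_sum, Prod.snd_sum]
  simp only [edgeCoeff, boundStep, sum_add_distrib, ← mul_sum]
  constructor
  · calc
      _ ≤ ν * (p.1 * (K * log ((T : ℝ) / L)) + p.2 * (K * (T : ℝ) ^ (2 * γ - 1))) := by gcongr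
      _ = ν * K * (p.1 * log ((T : ℝ) / L) + p.2 * (T : ℝ) ^ (2 * γ - 1)) := by ring
      _ ≤ _ := by gcongr
  · calc
      _ ≤ ν * (p.1 * (K * (L : ℝ) ^ (1 - 2 * γ)) + p.2 * (K * log ((T : ℝ) / L))) := by gcongr
      _ = ν * K * (p.1 * (L : ℝ) ^ (1 - 2 * γ) + p.2 * log ((T : ℝ) / L)) := by ring
      _ ≤ _ := by gcongr

lemma sum_mul_pfun_le_pathBound_boundStep (hγ0 : 1 / 2 < γ) (hγ1 : γ ≤ 1) (hν : 0 ≤ ν)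
    {c : ℝ} (hc : ν * (2 + 1 / (2 * γ - 1)) ≤ c) (hη : exp 1 ≤ (T : ℝ) / L) (hp : 0 ≤ p)
    {f : ℕ → ℝ}
    (hf : ∀ z ∈ Icc L T, f z ≤ (z : ℝ) ^ (-γ) * p.1 + (z : ℝ) ^ (γ - 1) * p.2) (x : ℕ) :
    ∑ z ∈ Icc L T, f z * pfun ν γ [z, x] ≤ pathBound γ L T (boundStep c γ L T p) x := by
  refine le_trans (sum_le_sum fun z hz => ?_) ((sum_pathBound _ _ x).trans_le
    (pathBound_mono (sum_edgeCoeff_le_boundStep hγ0 hγ1 hν hc hη hp) x))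
  obtain ⟨hLz, hzT⟩ := mem_Icc.1 hz
  exact (mul_le_mul_of_nonneg_right (hf z hz) (pfun_nonneg hν _)).trans
    (mul_pfun_pair_le_pathBound hν hp ((one_le_of_exp_one_le_div hη).trans hLz) hLz hzT x)

end Convolution

section Recursion

variable {ν γ : ℝ} {m : ℕ → ℕ} {T : ℕ}

lemma nonneg_of_boundStep {c : ℝ} (hc : 0 ≤ c) (hη : ∀ k, exp 1 ≤ (T : ℝ) / m k) {i : ℕ}
    {p : ℕ → ℝ × ℝ} (hp0 : 0 ≤ p 0)
    (hstep : ∀ n, p (n + 1) = boundStep c γ (m (i + n + 1)) T (p n)) (n : ℕ) : 0 ≤ p n := by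
  induction n with
  | zero => exact hp0
  | succ n ih =>
    rw [hstep n]
    exact boundStep_nonneg hc (zero_le_one.trans (one_le_log_of_exp_one_le_div (hη _))) ih

lemma ppRec_nonneg (hν : 0 ≤ ν) {c : ℝ} (hc : 0 ≤ c) (hη : ∀ k, exp 1 ≤ (T : ℝ) / m k)
    (i n : ℕ) : 0 ≤ ppRec c ν γ m T i (n + 1) :=
  nonneg_of_boundStep (p := fun n => ppRec c ν γ m T i (n + 1)) hc hη
    ⟨by simp only [ppRec]; positivity, le_rfl⟩ (fun _ => rfl) n

lemma ffun_le_pathBound_of_boundStep (hγ0 : 1 / 2 < γ) (hγ1 : γ ≤ 1) (hν : 0 ≤ ν)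
    {c : ℝ} (hc : ν * (2 + 1 / (2 * γ - 1)) ≤ c) (hη : ∀ k, exp 1 ≤ (T : ℝ) / m k)
    {i y : ℕ} {p : ℕ → ℝ × ℝ} (hp0 : 0 ≤ p 0)
    (hstep : ∀ n, p (n + 1) = boundStep c γ (m (i + n + 1)) T (p n))
    (hedge : ∀ x ≤ T, pfun ν γ [y, x] ≤ pathBound γ (m i) T (p 0) x)
    (n : ℕ) {x : ℕ} (hx : x ≤ T) :
    ffun ν γ m T i (i + n + 1) y x ≤ pathBound γ (m (i + n)) T (p n) x := by
  have hm : ∀ k, 1 ≤ m k := fun k => one_le_of_exp_one_le_div (hη k)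
  have hc0 : 0 ≤ c :=
    (mul_nonneg hν (add_nonneg zero_le_two (one_div_nonneg.2 (by linarith)))).trans hc
  have hp : ∀ n, 0 ≤ p n := nonneg_of_boundStep hc0 hη hp0 hstep
  induction n generalizing x with
  | zero => exact (ffun_succ_self hm i y x).trans_le (hedge x hx)
  | succ n ih =>
    rw [hstep n]
    exact (ffun_succ_le_sum hν hm i n y x).trans
      (sum_mul_pfun_le_pathBound_boundStep hγ0 hγ1 hν hc (hη _) (hp n)
        (fun z hz => (ih (mem_Icc.1 hz).2).trans (pathBound_le_add (hp n) z)) x)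

lemma pfun_pair_top_le_pathBound (hν : 0 ≤ ν) (L : ℕ) {x : ℕ} (hx : x ≤ T) :
    pfun ν γ [T, x] ≤ pathBound γ L T (ν * (T : ℝ) ^ (γ - 1), 0) x := by
  have coeff_nonneg : (0 : ℝ × ℝ) ≤ (ν * (T : ℝ) ^ (γ - 1), 0) :=
    ⟨by positivity, le_rfl⟩
  rcases hx.eq_or_lt with rfl | hxT
  · rw [pfun_pair_self]
    exact pathBound_nonneg coeff_nonneg x
  · rw [pfun_pair_comm, pfun_pair_of_lt hxT]
    exact le_of_eq_of_le (by ring) (le_pathBound_of_lt coeff_nonneg hxT)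

lemma pfun_pair_le_pathBound (hγ0 : 0 ≤ γ) (hγ1 : γ ≤ 1) (hν : 0 ≤ ν) {L q : ℕ} (hL : 1 ≤ L)
    (hLq : L ≤ q) (hqT : q ≤ T) (x : ℕ) :
    pfun ν γ [q, x] ≤ pathBound γ L T (ν * (L : ℝ) ^ (γ - 1), ν * (L : ℝ) ^ (-γ)) x := by
  have coeff_nonneg : (0 : ℝ × ℝ) ≤ (ν * (L : ℝ) ^ (γ - 1), ν * (L : ℝ) ^ (-γ)) :=
    ⟨by positivity, by positivity⟩
  have hL_pos : (0 : ℝ) < L := by exact_mod_cast hL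
  have hLq_cast : (L : ℝ) ≤ q := by exact_mod_cast hLq
  rcases lt_trichotomy q x with hqx | rfl | hxq
  · refine le_trans ?_ (le_pathBound_of_gt coeff_nonneg (hLq.trans_lt hqx))
    calc
      pfun ν γ [q, x] = (x : ℝ) ^ (γ - 1) * (ν * (q : ℝ) ^ (-γ)) := by
        rw [pfun_pair_of_lt hqx]; ring
      _ ≤ (x : ℝ) ^ (γ - 1) * (ν * (L : ℝ) ^ (-γ)) := by
        gcongr _ * (_ * ?_)
        exact rpow_le_rpow_of_nonpos hL_pos hLq_cast (by linarith)
  · rw [pfun_pair_self]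
    exact pathBound_nonneg coeff_nonneg q
  · refine le_trans ?_ (le_pathBound_of_lt coeff_nonneg (hxq.trans_le hqT))
    calc
      pfun ν γ [q, x] = (x : ℝ) ^ (-γ) * (ν * (q : ℝ) ^ (γ - 1)) := by
        rw [pfun_pair_comm, pfun_pair_of_lt hxq]; ring
      _ ≤ (x : ℝ) ^ (-γ) * (ν * (L : ℝ) ^ (γ - 1)) := by
        gcongr _ * (_ * ?_)
        exact rpow_le_rpow_of_nonpos hL_pos hLq_cast (by linarith)

lemma ffun_le_pathBound_ppRec (hγ0 : 1 / 2 < γ) (hγ1 : γ ≤ 1) (hν : 0 ≤ ν) {c : ℝ}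
    (hc : ν * (2 + 1 / (2 * γ - 1)) ≤ c) (hη : ∀ k, exp 1 ≤ (T : ℝ) / m k)
    (i n : ℕ) {x : ℕ} (hx : x ≤ T) :
    ffun ν γ m T i (i + n + 1) T x ≤
      pathBound γ (m (i + n)) T (ppRec c ν γ m T i (n + 1)) x :=
  ffun_le_pathBound_of_boundStep (p := fun n => ppRec c ν γ m T i (n + 1)) hγ0 hγ1 hν hc hη
    ⟨by simp only [ppRec]; positivity, le_rfl⟩ (fun _ => rfl)
    (fun _ hx => pfun_pair_top_le_pathBound hν (m i) hx) n hx

lemma ffun_le_pathBound_abRec (hγ0 : 1 / 2 < γ) (hγ1 : γ ≤ 1) (hν : 0 ≤ ν) {c : ℝ}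
    (hc : ν * (2 + 1 / (2 * γ - 1)) ≤ c) (hη : ∀ k, exp 1 ≤ (T : ℝ) / m k)
    {q : ℕ} (hmq : m 0 ≤ q) (hqT : q ≤ T) (n : ℕ) {x : ℕ} (hx : x ≤ T) :
    ffun ν γ m T 0 (n + 1) q x ≤ pathBound γ (m n) T (abRec c ν γ m T (n + 1)) x := by
  have first_nonneg : 0 ≤ abRec c ν γ m T 1 :=
    ⟨by simp only [abRec]; positivity, by simp only [abRec]; positivity⟩
  have first_edge : ∀ x ≤ T, pfun ν γ [q, x] ≤ pathBound γ (m 0) T (abRec c ν γ m T 1) x :=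
    fun x _ => pfun_pair_le_pathBound (by linarith) hγ1 hν (one_le_of_exp_one_le_div (hη 0))
      hmq hqT x
  simpa only [zero_add] using
    ffun_le_pathBound_of_boundStep (i := 0) (p := fun n => abRec c ν γ m T (n + 1)) hγ0 hγ1 hν
      hc hη first_nonneg (fun n => by rw [zero_add]; rfl) first_edge n hx

end Recursion

theorem recursive_bounds_number_of_paths_general {γ ν : ℝ} (hγ0 : 1 / 2 < γ) (hγ1 : γ ≤ 1)
    (hν : 0 ≤ ν) :
    ∃ c : ℝ, 1 < c ∧
      ∀ (t' : ℕ) (m : ℕ → ℕ), (∀ k, exp 1 ≤ (t' : ℝ) / m k) →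
        (∀ i j x : ℕ, 1 ≤ j → 1 ≤ x → x ≤ t' →
          ffun ν γ m t' i (i + j) t' x ≤
            (x : ℝ) ^ (-γ) * (ppRec c ν γ m t' i j).1 +
            (if m (i + j - 1) < x then (x : ℝ) ^ (γ - 1) * (ppRec c ν γ m t' i j).2 else 0)) ∧
        (∀ q j x : ℕ, m 0 ≤ q → q ≤ t' → 1 ≤ j → 1 ≤ x → x ≤ t' →
          ffun ν γ m t' 0 j q x ≤
            (if x < t' then (x : ℝ) ^ (-γ) * (abRec c ν γ m t' j).1 else 0) +
            (if m (j - 1) < x then (x : ℝ) ^ (γ - 1) * (abRec c ν γ m t' j).2 else 0)) := by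
  obtain ⟨c, hc_max⟩ := exists_gt (max 1 (ν * (2 + 1 / (2 * γ - 1))))
  obtain ⟨hc1, hc⟩ := max_lt_iff.1 hc_max
  refine ⟨c, hc1, fun t' m hη => ⟨fun i j x hj _ hx => ?_, fun q j x hmq hqt hj _ hx => ?_⟩⟩
  · obtain ⟨n, rfl⟩ := Nat.exists_eq_add_of_le' hj
    exact (ffun_le_pathBound_ppRec hγ0 hγ1 hν hc.le hη i n hx).trans
      (pathBound_le_add_ite (ppRec_nonneg hν (by linarith) hη i n) x)
  · obtain ⟨n, rfl⟩ := Nat.exists_eq_add_of_le' hj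
    exact ffun_le_pathBound_abRec hγ0 hγ1 hν hc.le hη hmq hqt n hx

/-- **Lemma 3.12** (recursive bounds for the number of paths): for `γ ∈ (1/2,1)`
and `ν > 0` there is `c > 1` such that the path-counting functions `f` are bounded
by the recursively defined sequences `φ, ψ` (paths emanating from `t'`) and
`α, β` (paths emanating from a vertex `q`). -/
theorem recursive_bounds_number_of_paths
    (γ ν : ℝ) (hγ0 : 1 / 2 < γ) (hγ1 : γ < 1) (hν : 0 < ν) :
    ∃ c : ℝ, 1 < c ∧
      ∀ t t' : ℕ, 1 ≤ t → t ≤ t' →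
        ∀ ℓ : ℕ → ℕ → ℕ, BirthArray t ℓ →
          (∀ j : ℕ, Real.exp 1 ≤ (t' : ℝ) / ℓ j t') →
          (∀ i j x : ℕ, 1 ≤ j → 1 ≤ x → x ≤ t' →
            ffun ν γ (fun k => ℓ k t') t' i (i + j) t' x ≤
              (x : ℝ) ^ (-γ) * (ppRec c ν γ (fun k => ℓ k t') t' i j).1 +
              (if ℓ (i + j - 1) t' < x then
                (x : ℝ) ^ (γ - 1) * (ppRec c ν γ (fun k => ℓ k t') t' i j).2
              else 0)) ∧
          (∀ q j x : ℕ, ℓ 0 t' ≤ q → q ≤ t' → 1 ≤ j → 1 ≤ x → x ≤ t' →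
            ffun ν γ (fun k => ℓ k t') t' 0 j q x ≤
              (if x < t' then
                (x : ℝ) ^ (-γ) * (abRec c ν γ (fun k => ℓ k t') t' j).1
              else 0) +
              (if ℓ (j - 1) t' < x then
                (x : ℝ) ^ (γ - 1) * (abRec c ν γ (fun k => ℓ k t') t' j).2
              else 0)) := by
  obtain ⟨c, hc, bounds⟩ := recursive_bounds_number_of_paths_general hγ0 hγ1.le hν.le
  exact ⟨c, hc, fun _ t' _ _ ℓ _ hη => bounds t' (fun k => ℓ k t') hη⟩

end
end

section
/- Let γ∈(1/2,1), ν>0, c>1, let t≥1, t'≥t, and let (ℓ_{k,t'})_{k≥0,t'≥t} be a birth-threshold array with η_{j,t'}:=t'/ℓ_{j,t'}≥e for all j≥0, and let the sequences α_{[0,k)}, β_{[0,k)}, φ_{[i,k)}, ψ_{[i,k)} be defined by the recursions in the context. Then there exists C>0 (depending only on c, ν, γ) such that for all k≥2: Σ_{i=1}^{k−1} β_{[0,i)}·ψ_{[i,k)} ≤ C·(k−2)·β_{[0,k)}·t'^{−γ}, and Σ_{i=1}^{k−1} β_{[0,i)}·φ_{[i,k)} ≤ C·(k−1)·α_{[0,k)}·t'^{−γ}.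 -/
open MeasureTheory ProbabilityTheory Real Filter Finset

noncomputable section

/-!
The pairs `(α, β)` and `(φ, ψ)` evolve under the same linear maps, which are monotone because
`log η ≥ 0`; only the starting pairs differ. Since `t' ^ (γ - 1) = t' ^ (-γ) * t' ^ (2γ - 1)`, the
starting pair `(ν t' ^ (γ - 1), 0)` of `(φ, ψ)`, scaled by `β_{[0,i)}`, is dominated by
`(ν / c) t' ^ (-γ)` times `(α_{[0,i+1)}, β_{[0,i+1)})`. Applying the monotone maps propagates this
domination from `i + 1` to `k`, so each summand is at most `(ν / c) t' ^ (-γ)` times the entry at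
`k`. There are `k - 1` summands, and for `ψ` the last one vanishes.
-/

/-- The common linear step of the recursions for `(α, β)` and `(φ, ψ)`, where `m` stands for the
threshold `ℓ_{j,t'}` of the step from `[i, j)` to `[i, j + 1)`. -/
def recStep (c γ : ℝ) (t' m : ℕ) : ℝ × ℝ →ₗ[ℝ] ℝ × ℝ where
  toFun p :=
    (c * (p.1 * log ((t' : ℝ) / m) + p.2 * (t' : ℝ) ^ (2 * γ - 1)),
     c * (p.1 * (m : ℝ) ^ (1 - 2 * γ) + p.2 * log ((t' : ℝ) / m)))
  map_add' p q := by ext <;> simp only [Prod.fst_add, Prod.snd_add] <;> ring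
  map_smul' r p := by
    ext <;> simp only [Prod.smul_fst, Prod.smul_snd, smul_eq_mul, RingHom.id_apply] <;> ring

theorem recStep_apply (c γ : ℝ) (t' m : ℕ) (p : ℝ × ℝ) :
    recStep c γ t' m p =
      (c * (p.1 * log ((t' : ℝ) / m) + p.2 * (t' : ℝ) ^ (2 * γ - 1)),
       c * (p.1 * (m : ℝ) ^ (1 - 2 * γ) + p.2 * log ((t' : ℝ) / m))) :=
  rfl

theorem abRec_add_two (c ν γ : ℝ) (ℓt : ℕ → ℕ) (t' j : ℕ) :
    abRec c ν γ ℓt t' (j + 2) = recStep c γ t' (ℓt (j + 1)) (abRec c ν γ ℓt t' (j + 1)) :=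
  rfl

theorem ppRec_add_two (c ν γ : ℝ) (ℓt : ℕ → ℕ) (t' i j : ℕ) :
    ppRec c ν γ ℓt t' i (j + 2) =
      recStep c γ t' (ℓt (i + j + 1)) (ppRec c ν γ ℓt t' i (j + 1)) :=
  rfl

theorem recStep_monotone {c : ℝ} (hc : 0 ≤ c) (γ : ℝ) {t' m : ℕ} (hη : 1 ≤ (t' : ℝ) / m) :
    Monotone (recStep c γ t' m) := by
  rintro ⟨x, y⟩ ⟨x', y'⟩ ⟨hx : x ≤ x', hy : y ≤ y'⟩
  have hlog : 0 ≤ log ((t' : ℝ) / m) := log_nonneg hη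
  simp only [recStep_apply, Prod.mk_le_mk]
  constructor <;> gcongr

theorem recStep_nonneg {c : ℝ} (hc : 0 ≤ c) (γ : ℝ) {t' m : ℕ} (hη : 1 ≤ (t' : ℝ) / m)
    {p : ℝ × ℝ} (hp : 0 ≤ p) : 0 ≤ recStep c γ t' m p := by
  simpa only [map_zero] using recStep_monotone hc γ hη hp

theorem snd_smul_start_le_smul_recStep {c ν : ℝ} (hc : 0 < c) (hν : 0 ≤ ν) (γ : ℝ) {t' m : ℕ}
    (hη : 1 ≤ (t' : ℝ) / m) {p : ℝ × ℝ} (hp : 0 ≤ p) :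
    p.2 • (ν * (t' : ℝ) ^ (γ - 1), (0 : ℝ)) ≤
      (ν / c * (t' : ℝ) ^ (-γ)) • recStep c γ t' m p := by
  have ht' : 0 < (t' : ℝ) := (Nat.cast_nonneg t').lt_of_ne' fun h => by
    rw [h, zero_div] at hη
    exact not_lt_of_ge hη one_pos
  have hpow : (t' : ℝ) ^ (γ - 1) = (t' : ℝ) ^ (-γ) * (t' : ℝ) ^ (2 * γ - 1) := by
    rw [← rpow_add ht']
    ring_nf
  have hstep : 0 ≤ recStep c γ t' m p := recStep_nonneg hc.le γ hη hp
  refine Prod.le_def.2 ⟨?_, ?_⟩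
  · have hlog : 0 ≤ p.1 * log ((t' : ℝ) / m) := mul_nonneg hp.1 (log_nonneg hη)
    calc p.2 * (ν * (t' : ℝ) ^ (γ - 1))
        = ν / c * (t' : ℝ) ^ (-γ) * (c * (p.2 * (t' : ℝ) ^ (2 * γ - 1))) := by
          rw [hpow]
          field_simp
      _ ≤ ν / c * (t' : ℝ) ^ (-γ) *
            (c * (p.1 * log ((t' : ℝ) / m) + p.2 * (t' : ℝ) ^ (2 * γ - 1))) := by
          gcongr
          exact le_add_of_nonneg_left hlog
  · calc p.2 * 0 = 0 := mul_zero _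
      _ ≤ ν / c * (t' : ℝ) ^ (-γ) * (recStep c γ t' m p).2 := mul_nonneg (by positivity) hstep.2

section Convolution

variable {c ν : ℝ} {ℓt : ℕ → ℕ} {t' : ℕ}

theorem abRec_nonneg (hc : 0 < c) (hν : 0 ≤ ν) (γ : ℝ)
    (hη : ∀ j, 1 ≤ (t' : ℝ) / ℓt j) (n : ℕ) : 0 ≤ abRec c ν γ ℓt t' n := by
  induction n using Nat.twoStepInduction with
  | zero => exact le_rfl
  | one => exact Prod.le_def.2 ⟨by simp only [abRec]; positivity, by simp only [abRec]; positivity⟩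
  | more j _ ih => exact recStep_nonneg hc.le γ (hη (j + 1)) ih

theorem abRec_snd_smul_ppRec_le (hc : 0 < c) (hν : 0 ≤ ν) (γ : ℝ)
    (hη : ∀ j, 1 ≤ (t' : ℝ) / ℓt j) (i j : ℕ) :
    (abRec c ν γ ℓt t' i).2 • ppRec c ν γ ℓt t' i j ≤
      (ν / c * (t' : ℝ) ^ (-γ)) • abRec c ν γ ℓt t' (i + j) := by
  have hbound (n : ℕ) : 0 ≤ (ν / c * (t' : ℝ) ^ (-γ)) • abRec c ν γ ℓt t' n :=
    smul_nonneg (by positivity) (abRec_nonneg hc hν γ hη n)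
  induction j using Nat.twoStepInduction with
  | zero => exact (smul_zero _).trans_le (hbound i)
  | one =>
    rcases i with _ | i
    · exact (zero_smul ℝ _).trans_le (hbound 1)
    · exact snd_smul_start_le_smul_recStep hc hν γ (hη (i + 1)) (abRec_nonneg hc hν γ hη (i + 1))
  | more j _ ih =>
    rw [ppRec_add_two, ← map_smul, ← add_assoc, abRec_add_two, ← map_smul]
    exact recStep_monotone hc.le γ (hη (i + j + 1)) ih

theorem sum_abRec_snd_mul_ppRec_snd_le (hc : 0 < c) (hν : 0 ≤ ν) (γ : ℝ)
    (hη : ∀ j, 1 ≤ (t' : ℝ) / ℓt j) {k : ℕ} (hk : 2 ≤ k) :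
    ∑ i ∈ Icc 1 (k - 1), (abRec c ν γ ℓt t' i).2 * (ppRec c ν γ ℓt t' i (k - i)).2 ≤
      ν / c * ((k : ℝ) - 2) * (abRec c ν γ ℓt t' k).2 * (t' : ℝ) ^ (-γ) := by
  obtain ⟨n, rfl⟩ := Nat.exists_eq_add_of_le' hk
  have hlast : (ppRec c ν γ ℓt t' (n + 1) (n + 2 - (n + 1))).2 = 0 := by
    rw [Nat.add_sub_add_left]
    rfl
  have hterm (i : ℕ) (hi : i ∈ Icc 1 n) :
      (abRec c ν γ ℓt t' i).2 * (ppRec c ν γ ℓt t' i (n + 2 - i)).2 ≤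
        ν / c * (t' : ℝ) ^ (-γ) * (abRec c ν γ ℓt t' (n + 2)).2 := by
    have h := (abRec_snd_smul_ppRec_le hc hν γ hη i (n + 2 - i)).2
    rwa [Nat.add_sub_of_le (by grind)] at h
  calc ∑ i ∈ Icc 1 (n + 1), (abRec c ν γ ℓt t' i).2 * (ppRec c ν γ ℓt t' i (n + 2 - i)).2
      = ∑ i ∈ Icc 1 n, (abRec c ν γ ℓt t' i).2 * (ppRec c ν γ ℓt t' i (n + 2 - i)).2 := by
        rw [sum_Icc_succ_top (Nat.le_add_left 1 n), hlast, mul_zero, add_zero]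
    _ ≤ #(Icc 1 n) • (ν / c * (t' : ℝ) ^ (-γ) * (abRec c ν γ ℓt t' (n + 2)).2) :=
        sum_le_card_nsmul _ _ _ hterm
    _ = _ := by
        rw [Nat.card_Icc, Nat.add_sub_cancel, nsmul_eq_mul]
        push_cast
        ring

theorem sum_abRec_snd_mul_ppRec_fst_le (hc : 0 < c) (hν : 0 ≤ ν) (γ : ℝ)
    (hη : ∀ j, 1 ≤ (t' : ℝ) / ℓt j) {k : ℕ} (hk : 1 ≤ k) :
    ∑ i ∈ Icc 1 (k - 1), (abRec c ν γ ℓt t' i).2 * (ppRec c ν γ ℓt t' i (k - i)).1 ≤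
      ν / c * ((k : ℝ) - 1) * (abRec c ν γ ℓt t' k).1 * (t' : ℝ) ^ (-γ) := by
  have hterm (i : ℕ) (hi : i ∈ Icc 1 (k - 1)) :
      (abRec c ν γ ℓt t' i).2 * (ppRec c ν γ ℓt t' i (k - i)).1 ≤
        ν / c * (t' : ℝ) ^ (-γ) * (abRec c ν γ ℓt t' k).1 := by
    have h := (abRec_snd_smul_ppRec_le hc hν γ hη i (k - i)).1
    rwa [Nat.add_sub_of_le (by grind)] at h
  calc ∑ i ∈ Icc 1 (k - 1), (abRec c ν γ ℓt t' i).2 * (ppRec c ν γ ℓt t' i (k - i)).1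
      ≤ #(Icc 1 (k - 1)) • (ν / c * (t' : ℝ) ^ (-γ) * (abRec c ν γ ℓt t' k).1) :=
        sum_le_card_nsmul _ _ _ hterm
    _ = _ := by
        rw [Nat.card_Icc, Nat.add_sub_cancel, nsmul_eq_mul, Nat.cast_sub hk, Nat.cast_one]
        ring

theorem convolution_bounds_general (hc : 0 < c) (hν : 0 ≤ ν) (γ : ℝ)
    (hη : ∀ j, 1 ≤ (t' : ℝ) / ℓt j) {k : ℕ} (hk : 2 ≤ k) :
    (∑ i ∈ Icc 1 (k - 1), (abRec c ν γ ℓt t' i).2 * (ppRec c ν γ ℓt t' i (k - i)).2 ≤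
      ν / c * ((k : ℝ) - 2) * (abRec c ν γ ℓt t' k).2 * (t' : ℝ) ^ (-γ)) ∧
    ∑ i ∈ Icc 1 (k - 1), (abRec c ν γ ℓt t' i).2 * (ppRec c ν γ ℓt t' i (k - i)).1 ≤
      ν / c * ((k : ℝ) - 1) * (abRec c ν γ ℓt t' k).1 * (t' : ℝ) ^ (-γ) :=
  ⟨sum_abRec_snd_mul_ppRec_snd_le hc hν γ hη hk,
    sum_abRec_snd_mul_ppRec_fst_le hc hν γ hη (one_le_two.trans hk)⟩

end Convolution

/-- **Lemma 3.12'** (convolution bounds): there is `C > 0`, depending only on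
`c, ν, γ`, bounding the convolutions `Σ_i β_{[0,i)}ψ_{[i,k)}` and
`Σ_i β_{[0,i)}φ_{[i,k)}` in terms of `β_{[0,k)}` and `α_{[0,k)}`. -/
theorem convolution_bounds
    (γ ν c : ℝ) (hγ0 : 1 / 2 < γ) (hγ1 : γ < 1) (hν : 0 < ν) (hc : 1 < c) :
    ∃ C : ℝ, 0 < C ∧
      ∀ t t' : ℕ, 1 ≤ t → t ≤ t' →
        ∀ ℓ : ℕ → ℕ → ℕ, BirthArray t ℓ →
          (∀ j : ℕ, Real.exp 1 ≤ (t' : ℝ) / ℓ j t') →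
          ∀ k : ℕ, 2 ≤ k →
            (∑ i ∈ Finset.Icc 1 (k - 1),
                (abRec c ν γ (fun j => ℓ j t') t' i).2 *
                (ppRec c ν γ (fun j => ℓ j t') t' i (k - i)).2) ≤
              C * ((k : ℝ) - 2) * (abRec c ν γ (fun j => ℓ j t') t' k).2 *
                (t' : ℝ) ^ (-γ) ∧
            (∑ i ∈ Finset.Icc 1 (k - 1),
                (abRec c ν γ (fun j => ℓ j t') t' i).2 *
                (ppRec c ν γ (fun j => ℓ j t') t' i (k - i)).1) ≤
              C * ((k : ℝ) - 1) * (abRec c ν γ (fun j => ℓ j t') t' k).1 *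
                (t' : ℝ) ^ (-γ) := by
  have hc0 : 0 < c := one_pos.trans hc
  exact ⟨ν / c, div_pos hν hc0, fun t t' _ _ ℓ _ hη k hk =>
    convolution_bounds_general hc0 hν.le γ (fun j => (one_le_exp zero_le_one).trans (hη j)) hk⟩

end
end
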